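/- arXiv:1007.4621 — 2 statements merged into one kernel-verified Lean document; each statement's English description precedes it below -/
import Mathlib

section
/- Let q be a prime power and let λ_1, …, λ_r be positive integers with λ_1 + ⋯ + λ_r = s. Then ∏_{i=1}^{r} h(λ_i) ≤ h(2)^{s/2}. -/
open Polynomial

/-!
Since `∑ λᵢ = s` and every `h(λ)` is nonnegative, it suffices to show `h(λ) ≤ h(2)^(λ/2)` for
each `λ ≥ 1`. Write `S = √h(2)`, `x = |P|⁻¹` and `q = #Fq`.

For `λ ≥ 2`, each `u_P` and `v_P` is at most `S`, so `u_P^λ + v_P^λ ≤ (u_P² + v_P²) S^(λ-2)`, and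
summing over `P` gives `h(λ) ≤ S^λ` (`hfun_le_sqrt_pow_of_two_le`).

For `λ = 1`, both sides are compared with `1/(q-1)`. On one hand
`u_P - v_P = -log(1 - x²) ≤ q²/(q²-1) · x²`, and `∑_P |P|⁻² ≤ 1/q² + 1/q`, because a monic
irreducible polynomial other than `X` has a nonzero constant coefficient, which leaves at most
`(q-1) q^(n-1)` of them in degree `n`. Hence `h(1) ≤ 1/(q-1)` (`hfun_one_le`). On the other hand,
for the `q` polynomials `P = X - a` one has `u_P + v_P = log((1+x)/(1-x)) ≥ 2x = 2/q`, hence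
`u_P² + v_P² ≥ 2/q²`, so `h(2) ≥ 2/q ≥ 1/(q-1)²` (`two_div_le_hfun_two`).
-/

/-- `u_P = -log(1 - |P|⁻¹)` where `|P| = q^(deg P)`. -/
noncomputable def uP {Fq : Type} [Field Fq] [Fintype Fq] (P : Polynomial Fq) : ℝ :=
  -Real.log (1 - ((Fintype.card Fq : ℝ) ^ P.natDegree)⁻¹)

/-- `v_P = log(1 + |P|⁻¹)` where `|P| = q^(deg P)`. -/
noncomputable def vP {Fq : Type} [Field Fq] [Fintype Fq] (P : Polynomial Fq) : ℝ :=
  Real.log (1 + ((Fintype.card Fq : ℝ) ^ P.natDegree)⁻¹)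

/-- `h(λ) = ∑_P (u_P^λ + (-1)^λ v_P^λ)`, the sum over all monic irreducible
polynomials `P ∈ Fq[X]`. -/
noncomputable def hfun (Fq : Type) [Field Fq] [Fintype Fq] (l : ℕ) : ℝ :=
  ∑' P : {P : Polynomial Fq // P.Monic ∧ Irreducible P},
    (uP P.1 ^ l + (-1 : ℝ) ^ l * vP P.1 ^ l)

theorem le_neg_log_one_sub {x : ℝ} (h1 : x < 1) : x ≤ -Real.log (1 - x) := by
  have := Real.log_le_sub_one_of_pos (sub_pos.2 h1)
  linarith

theorem neg_log_one_sub_le {x : ℝ} (h1 : x < 1) : -Real.log (1 - x) ≤ x / (1 - x) := by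
  have h := Real.one_sub_inv_le_log_of_pos (sub_pos.2 h1)
  have h2 : x / (1 - x) = (1 - x)⁻¹ - 1 := by
    have : (1 - x) ≠ 0 := (sub_pos.2 h1).ne'
    field_simp
    ring
  linarith

/-- The first term of the power series `log((1+x)/(1-x)) = 2 ∑ x^(2k+1)/(2k+1)`. -/
theorem two_mul_le_log_sub_log {x : ℝ} (h0 : 0 ≤ x) (h1 : x < 1) :
    2 * x ≤ Real.log (1 + x) - Real.log (1 - x) := by
  have h := Real.hasSum_log_sub_log_of_abs_lt_one (abs_lt.2 ⟨by linarith, h1⟩)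
  have := h.summable.le_tsum 0 (fun j _ => by positivity)
  rw [h.tsum_eq] at this
  simpa using this

/-- The monic irreducible polynomials over `Fq`. -/
abbrev MonicIrr (Fq : Type) [Field Fq] := {P : Polynomial Fq // P.Monic ∧ Irreducible P}

/-- The inverse norm `|P|⁻¹ = q^(-deg P)`. -/
noncomputable def invNorm {Fq : Type} [Field Fq] [Fintype Fq] (P : Polynomial Fq) : ℝ :=
  ((Fintype.card Fq : ℝ) ^ P.natDegree)⁻¹

theorem coeff_zero_ne {Fq : Type} [Field Fq] {P : Polynomial Fq}
    (hP : P.Monic ∧ Irreducible P) (hX : P ≠ X) :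
    P.coeff 0 ≠ 0 := by
  intro h
  apply hX
  exact (eq_of_monic_of_associated monic_X hP.1
    (irreducible_X.associated_of_dvd hP.2 (X_dvd_iff.2 h))).symm

/-- Codes for monic irreducible polynomials: `inl ()` stands for `X`, and `inr ⟨m, c, a⟩` for the
monic polynomial of degree `m + 1` with coefficients `c` in degrees `1, …, m` and nonzero constant
coefficient `a`. -/
abbrev Code (Fq : Type) [Field Fq] := Unit ⊕ Σ m : ℕ, (Fin m → Fq) × Fqˣ

open Classical in
/-- The code of a monic irreducible polynomial. -/
noncomputable def encode {Fq : Type} [Field Fq] (P : MonicIrr Fq) : Code Fq :=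
  if hX : P.1 = X then .inl () else
    .inr ⟨P.1.natDegree - 1, fun i => P.1.coeff (i + 1), Units.mk0 _ (coeff_zero_ne P.2 hX)⟩

theorem encode_injective {Fq : Type} [Field Fq] : Function.Injective (encode (Fq := Fq)) := by
  intro P Q h
  apply Subtype.ext
  by_cases hP : P.1 = X <;> by_cases hQ : Q.1 = X <;>
    simp only [encode, hP, hQ, dite_true, dite_false, reduceCtorEq, Sum.inr.injEq] at h ⊢
  have hdp := P.2.2.natDegree_pos
  have hdq := Q.2.2.natDegree_pos
  -- Stated for arbitrary indices so that the equality of the dependent pairs can be destructured.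
  have key : ∀ (m n : ℕ) (a b : ℕ → Fq) (c d : Fqˣ),
      (⟨m, fun i => a (i + 1), c⟩ : Σ m : ℕ, (Fin m → Fq) × Fqˣ) = ⟨n, fun i => b (i + 1), d⟩ →
      m = n ∧ c = d ∧ ∀ i < m, a (i + 1) = b (i + 1) := by
    intro m n a b c d h
    obtain ⟨rfl, h⟩ := Sigma.mk.inj h
    have h := eq_of_heq h
    rw [Prod.mk.injEq] at h
    exact ⟨rfl, h.2, fun i hi => congrFun h.1 ⟨i, hi⟩⟩
  obtain ⟨h1, h2, h3⟩ := key _ _ P.1.coeff Q.1.coeff _ _ h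
  have h2 : P.1.coeff 0 = Q.1.coeff 0 := congrArg Units.val h2
  have hd : P.1.natDegree = Q.1.natDegree := by omega
  ext n
  rcases lt_trichotomy n P.1.natDegree with hn | hn | hn
  · rcases n with _ | n
    · exact h2
    · exact h3 n (by omega)
  · have hp := P.2.1.coeff_natDegree
    have hq := Q.2.1.coeff_natDegree
    rw [← hn] at hp
    rw [← hd, ← hn] at hq
    rw [hp, hq]
  · rw [coeff_eq_zero_of_natDegree_lt hn, coeff_eq_zero_of_natDegree_lt (by omega)]

section
variable {Fq : Type} [Field Fq] [Fintype Fq]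

theorem two_le_card : (2 : ℝ) ≤ Fintype.card Fq := by
  exact_mod_cast Fintype.one_lt_card (α := Fq)

theorem invNorm_pos (P : Polynomial Fq) : 0 < invNorm P := by
  have := two_le_card (Fq := Fq)
  unfold invNorm
  positivity

theorem invNorm_le (P : MonicIrr Fq) : invNorm P.1 ≤ (Fintype.card Fq : ℝ)⁻¹ := by
  have := two_le_card (Fq := Fq)
  unfold invNorm
  apply inv_anti₀ (by linarith)
  exact le_self_pow₀ (by linarith) P.2.2.natDegree_pos.ne'

theorem invNorm_le_half (P : MonicIrr Fq) : invNorm P.1 ≤ 1 / 2 := by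
  refine (invNorm_le P).trans ?_
  rw [one_div]
  exact inv_anti₀ (by norm_num) two_le_card

theorem invNorm_le_uP (P : MonicIrr Fq) : invNorm P.1 ≤ uP P.1 :=
  le_neg_log_one_sub (by linarith [invNorm_le_half P])

theorem uP_le (P : MonicIrr Fq) : uP P.1 ≤ 2 * invNorm P.1 := by
  have h := invNorm_le_half P
  have h0 := invNorm_pos P.1
  refine (neg_log_one_sub_le (x := invNorm P.1) (by linarith)).trans ?_
  rw [div_le_iff₀ (by linarith)]
  nlinarith

theorem vP_nonneg (P : MonicIrr Fq) : 0 ≤ vP P.1 :=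
  Real.log_nonneg (by have := invNorm_pos P.1; unfold invNorm at this; linarith)

theorem vP_le (P : MonicIrr Fq) : vP P.1 ≤ invNorm P.1 := by
  have h := Real.log_le_sub_one_of_pos (x := 1 + invNorm P.1) (by linarith [invNorm_pos P.1])
  have : vP P.1 = Real.log (1 + invNorm P.1) := rfl
  linarith

/-- `u_P - v_P = -log(1 - x²) ≤ x²/(1 - x²)` with `x = |P|⁻¹ ≤ 1/q`. -/
theorem uP_sub_vP_le (P : MonicIrr Fq) :
    uP P.1 - vP P.1 ≤
      (Fintype.card Fq : ℝ) ^ 2 / ((Fintype.card Fq : ℝ) ^ 2 - 1) * invNorm P.1 ^ 2 := by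
  have h := invNorm_le_half P
  have h' := invNorm_le P
  have h0 := invNorm_pos P.1
  have hq := two_le_card (Fq := Fq)
  have e : uP P.1 - vP P.1 = -Real.log (1 - invNorm P.1 ^ 2) := by
    have : 1 - invNorm P.1 ^ 2 = (1 - invNorm P.1) * (1 + invNorm P.1) := by ring
    rw [this, Real.log_mul (by linarith) (by linarith)]
    unfold uP vP invNorm
    ring
  rw [e]
  refine (neg_log_one_sub_le (by nlinarith)).trans ?_
  have hx : invNorm P.1 * Fintype.card Fq ≤ 1 := by
    rwa [← le_div_iff₀ (by linarith), one_div]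
  have hx2 : (invNorm P.1 * Fintype.card Fq) ^ 2 ≤ 1 := pow_le_one₀ (by positivity) hx
  rw [div_mul_eq_mul_div, div_le_div_iff₀ (by nlinarith) (by nlinarith)]
  nlinarith [sq_nonneg (invNorm P.1)]

/-- The weight `|P|⁻²` of the polynomial `P` with the given code. -/
noncomputable def codeWeight : Code Fq → ℝ
  | .inl _ => ((Fintype.card Fq : ℝ) ^ 1)⁻¹ ^ 2
  | .inr c => ((Fintype.card Fq : ℝ) ^ (c.1 + 1))⁻¹ ^ 2

/-- There are `q^m (q-1)` codes of degree `m + 1`, each of weight `q^(-2(m+1))`; these sum to `1/q`,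
and the code of `X` adds `1/q²`. -/
theorem hasSum_codeWeight :
    HasSum (codeWeight (Fq := Fq)) ((Fintype.card Fq : ℝ)⁻¹ ^ 2 + (Fintype.card Fq : ℝ)⁻¹) := by
  classical
  have hq := two_le_card (Fq := Fq)
  set q : ℝ := (Fintype.card Fq : ℝ) with hqdef
  refine HasSum.sum (f := codeWeight (Fq := Fq)) ?_ ?_
  · convert hasSum_unique (codeWeight (Fq := Fq) ∘ Sum.inl) using 1
    simp [codeWeight, ← hqdef]
  · have hin : ∀ m : ℕ, HasSum (fun c : (Fin m → Fq) × Fqˣ =>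
        codeWeight (Fq := Fq) (.inr ⟨m, c⟩)) ((q - 1) / q ^ 2 * q⁻¹ ^ m) := by
      intro m
      have := hasSum_fintype (fun c : (Fin m → Fq) × Fqˣ => codeWeight (Fq := Fq) (.inr ⟨m, c⟩))
      convert this using 1
      have hu : (Fintype.card Fqˣ : ℝ) = q - 1 := by
        rw [Fintype.card_units, Nat.cast_sub Fintype.card_pos]; simp [hqdef]
      simp only [codeWeight, Finset.sum_const, Finset.card_univ, Fintype.card_prod,
        Fintype.card_fun, Fintype.card_fin, nsmul_eq_mul, Nat.cast_mul, Nat.cast_pow, hu, ← hqdef]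
      have : q ≠ 0 := by linarith
      rw [inv_pow]
      field_simp
      ring
    have hout : HasSum (fun m : ℕ => (q - 1) / q ^ 2 * q⁻¹ ^ m) q⁻¹ := by
      have := (hasSum_geometric_of_lt_one (r := q⁻¹) (by positivity)
        (inv_lt_one_of_one_lt₀ (by linarith))).mul_left ((q - 1) / q ^ 2)
      have h1 : q ≠ 0 := by linarith
      have h2 : q - 1 ≠ 0 := by linarith
      have h3 : 1 - q⁻¹ = (q - 1) / q := by field_simp
      have h4 : (q - 1) / q ^ 2 * (1 - q⁻¹)⁻¹ = q⁻¹ := by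
        rw [h3]
        field_simp
      rwa [h4] at this
    have hs : Summable (fun c : Σ m : ℕ, (Fin m → Fq) × Fqˣ => codeWeight (Fq := Fq) (.inr c)) := by
      rw [summable_sigma_of_nonneg (fun c => by simp only [codeWeight]; positivity)]
      refine ⟨fun m => (hin m).summable, ?_⟩
      simp_rw [fun m => (hin m).tsum_eq]
      exact hout.summable
    exact HasSum.sigma_of_hasSum hout hin hs

theorem codeWeight_encode (P : MonicIrr Fq) : codeWeight (encode P) = invNorm P.1 ^ 2 := by
  have hdp := P.2.2.natDegree_pos
  by_cases hP : P.1 = X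
  · simp [encode, hP, codeWeight, invNorm]
  · simp only [encode, hP, dite_false, codeWeight, invNorm]
    rw [Nat.sub_add_cancel hdp]

theorem summable_invNorm_sq : Summable (fun P : MonicIrr Fq => invNorm P.1 ^ 2) := by
  simpa only [Function.comp_def, codeWeight_encode] using
    (hasSum_codeWeight (Fq := Fq)).summable.comp_injective encode_injective

theorem tsum_invNorm_sq_le : ∑' P : MonicIrr Fq, invNorm P.1 ^ 2 ≤
    (Fintype.card Fq : ℝ)⁻¹ ^ 2 + (Fintype.card Fq : ℝ)⁻¹ := by
  rw [← (hasSum_codeWeight (Fq := Fq)).tsum_eq]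
  refine summable_invNorm_sq.tsum_le_tsum_of_inj encode encode_injective ?_
    (fun P => (codeWeight_encode P).ge) hasSum_codeWeight.summable
  rintro (c | c) - <;> simp only [codeWeight] <;> positivity

theorem vP_le_uP (P : MonicIrr Fq) : vP P.1 ≤ uP P.1 := (vP_le P).trans (invNorm_le_uP P)

theorem term_nonneg (l : ℕ) (P : MonicIrr Fq) :
    0 ≤ uP P.1 ^ l + (-1 : ℝ) ^ l * vP P.1 ^ l := by
  have h := pow_le_pow_left₀ (vP_nonneg P) (vP_le_uP P) l
  have h0 := pow_nonneg (vP_nonneg P) l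
  rcases neg_one_pow_eq_or ℝ l with e | e <;> rw [e] <;> linarith

theorem hfun_nonneg (l : ℕ) : 0 ≤ hfun Fq l := tsum_nonneg (term_nonneg l)

theorem hfun_two : hfun Fq 2 = ∑' P : MonicIrr Fq, (uP P.1 ^ 2 + vP P.1 ^ 2) := by
  simp [hfun]

theorem summable_two : Summable (fun P : MonicIrr Fq => uP P.1 ^ 2 + vP P.1 ^ 2) := by
  refine Summable.of_nonneg_of_le (fun P => by positivity) (fun P => ?_)
    (summable_invNorm_sq.mul_left 5)
  have h1 := pow_le_pow_left₀ ((invNorm_pos P.1).le.trans (invNorm_le_uP P)) (uP_le P) 2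
  have h2 := pow_le_pow_left₀ (vP_nonneg P) (vP_le P) 2
  linarith

theorem hfun_one_le : hfun Fq 1 ≤ ((Fintype.card Fq : ℝ) - 1)⁻¹ := by
  have hq := two_le_card (Fq := Fq)
  have hs := (summable_invNorm_sq (Fq := Fq)).mul_left
    ((Fintype.card Fq : ℝ) ^ 2 / ((Fintype.card Fq : ℝ) ^ 2 - 1))
  have hle : ∀ P : MonicIrr Fq, uP P.1 ^ 1 + (-1 : ℝ) ^ 1 * vP P.1 ^ 1 ≤
      (Fintype.card Fq : ℝ) ^ 2 / ((Fintype.card Fq : ℝ) ^ 2 - 1) * invNorm P.1 ^ 2 := by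
    intro P
    have := uP_sub_vP_le P
    simpa [sub_eq_add_neg] using this
  have hs' := Summable.of_nonneg_of_le (term_nonneg 1) hle hs
  refine (hs'.tsum_le_tsum hle hs).trans ?_
  rw [tsum_mul_left]
  have hpos : (0 : ℝ) < (Fintype.card Fq : ℝ) ^ 2 - 1 := by nlinarith
  refine (mul_le_mul_of_nonneg_left tsum_invNorm_sq_le (by positivity)).trans_eq ?_
  generalize (Fintype.card Fq : ℝ) = q at *
  have h1 : q ≠ 0 := by linarith
  have h2 : q - 1 ≠ 0 := by linarith
  have h3 := hpos.ne'
  field_simp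
  ring

/-- The contribution of the `q` monic linear polynomials to `h(2)` is at least `q · 2/q²`. -/
theorem two_div_le_hfun_two : 2 / (Fintype.card Fq : ℝ) ≤ hfun Fq 2 := by
  have hq := two_le_card (Fq := Fq)
  let e : Fq ↪ MonicIrr Fq :=
    ⟨fun a => ⟨X - C a, monic_X_sub_C a, irreducible_X_sub_C a⟩, fun a b h => by
      simpa using congrArg Subtype.val h⟩
  have h := summable_two.sum_le_tsum (Finset.univ.map e) (fun P _ => by positivity)
  rw [← hfun_two] at h
  refine le_trans ?_ h
  rw [Finset.sum_map]
  have hterm : ∀ a : Fq, 2 / (Fintype.card Fq : ℝ) ^ 2 ≤ uP (e a).1 ^ 2 + vP (e a).1 ^ 2 := by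
    intro a
    have hn : invNorm (e a).1 = (Fintype.card Fq : ℝ)⁻¹ := by
      have : (e a).1 = X - C a := rfl
      simp [this, invNorm]
    have h2 : 2 * invNorm (e a).1 ≤ vP (e a).1 + uP (e a).1 :=
      two_mul_le_log_sub_log (invNorm_pos _).le (by linarith [invNorm_le_half (e a)])
    have h0 := invNorm_pos (e a).1
    have : 2 / (Fintype.card Fq : ℝ) ^ 2 = 2 * invNorm (e a).1 ^ 2 := by
      rw [hn, inv_pow, div_eq_mul_inv]
    rw [this]
    nlinarith [sq_nonneg (uP (e a).1 - vP (e a).1)]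
  refine le_trans (le_of_eq ?_) (Finset.sum_le_sum fun a _ => hterm a)
  rw [Finset.sum_const, Finset.card_univ, nsmul_eq_mul]
  field_simp

theorem hfun_one_le_sqrt : hfun Fq 1 ≤ √(hfun Fq 2) := by
  have hq := two_le_card (Fq := Fq)
  refine hfun_one_le.trans (Real.le_sqrt_of_sq_le (le_trans ?_ two_div_le_hfun_two))
  rw [inv_pow, ← one_div, div_le_div_iff₀ (pow_pos (by linarith) 2) (by linarith)]
  nlinarith

theorem hfun_le_sqrt_pow_of_two_le {l : ℕ} (hl : 2 ≤ l) : hfun Fq l ≤ √(hfun Fq 2) ^ l := by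
  obtain ⟨k, rfl⟩ := Nat.exists_eq_add_of_le hl
  set S := √(hfun Fq 2) with hS
  have hle2 : ∀ P : MonicIrr Fq, uP P.1 ^ 2 + vP P.1 ^ 2 ≤ hfun Fq 2 := fun P => by
    rw [hfun_two]
    exact summable_two.le_tsum P (fun _ _ => by positivity)
  have hle : ∀ P : MonicIrr Fq, uP P.1 ^ (2 + k) + (-1 : ℝ) ^ (2 + k) * vP P.1 ^ (2 + k) ≤
      (uP P.1 ^ 2 + vP P.1 ^ 2) * S ^ k := by
    intro P
    have hv0 := vP_nonneg P
    have hu0 := hv0.trans (vP_le_uP P)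
    have hu : uP P.1 ≤ S := Real.le_sqrt_of_sq_le (by nlinarith [hle2 P])
    have hv : vP P.1 ≤ S := (vP_le_uP P).trans hu
    have h1 := mul_le_mul_of_nonneg_left (pow_le_pow_left₀ hu0 hu k) (sq_nonneg (uP P.1))
    have h2 := mul_le_mul_of_nonneg_left (pow_le_pow_left₀ hv0 hv k) (sq_nonneg (vP P.1))
    rw [← pow_add] at h1 h2
    have h3 := pow_nonneg hv0 (2 + k)
    rw [add_mul]
    rcases neg_one_pow_eq_or ℝ (2 + k) with e | e <;> rw [e] <;> linarith
  have hs := (summable_two (Fq := Fq)).mul_right (S ^ k)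
  have hs' := Summable.of_nonneg_of_le (term_nonneg (2 + k)) hle hs
  refine (hs'.tsum_le_tsum hle hs).trans_eq ?_
  rw [tsum_mul_right, ← hfun_two, pow_add, hS, Real.sq_sqrt (hfun_nonneg 2)]

theorem hfun_le_sqrt_pow {l : ℕ} (hl : 0 < l) : hfun Fq l ≤ √(hfun Fq 2) ^ l := by
  rcases (Nat.succ_le_of_lt hl).eq_or_lt with rfl | h
  · simpa using hfun_one_le_sqrt
  · exact hfun_le_sqrt_pow_of_two_le h

end

/-- Let `q` be a prime power (realized as the cardinality of a finite field `Fq`) and let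
`λ₁, …, λᵣ` be positive integers with `λ₁ + ⋯ + λᵣ = s`.  Then
`∏ i, h(λᵢ) ≤ h(2)^(s/2)` (real power). -/
theorem hfun_prod_le (Fq : Type) [Field Fq] [Fintype Fq] (r : ℕ) (lam : Fin r → ℕ)
    (hlam : ∀ i, 0 < lam i) (s : ℕ) (hsum : ∑ i, lam i = s) :
    ∏ i, hfun Fq (lam i) ≤ hfun Fq 2 ^ ((s : ℝ) / 2) := by
  refine (Finset.prod_le_prod (fun i _ => hfun_nonneg (lam i))
    (fun i _ => hfun_le_sqrt_pow (hlam i))).trans_eq ?_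
  rw [Finset.prod_pow_eq_pow_sum, hsum, Real.sqrt_eq_rpow, ← Real.rpow_natCast,
    ← Real.rpow_mul (hfun_nonneg 2)]
  congr 1
  ring
end

section
/- For every odd integer λ ≥ 1 there is a constant C_λ > 0, depending only on λ, such that for every prime power q one has |z(λ) − λ q^{−λ}| ≤ C_λ q^{−λ−1}, where z(λ) = ∑_P (u_P^λ − v_P^λ)/(1 + |P|^{−1}), the sum over all monic irreducible polynomials P ∈ 𝔽_q[X]. -/
/-!
Write `x = |P|⁻¹ ∈ (0, 1/2]`. Since `u_P - v_P = -log (1 - x²) = x² + O(x⁴)` and both `u_P` and `v_P`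
are `x + O(x²)`, factoring `u^l - v^l = (u - v) ∑ u^i v^(l-1-i)` shows that the summand is
`l x^(l+1) + O_l(x^(l+2))` (`summand_estimate`). The `q` monic polynomials of degree one therefore
contribute `q * l q^(-l-1) = l q^(-l)` up to `O_l(q^(-l-1))`. As there are at most `q^n` monic
polynomials of degree `n`, the degrees `n ≥ 2` contribute at most
`O_l(∑_{n ≥ 2} q^(-n l)) = O_l(q^(-l-1))`.

Both error terms are handled together: after subtracting `l q^(-l-1)` from the summands of
degree one, each summand is at most `O_l(q^(-l-1)) * (2 q)^(-deg P)`
(`abs_sub_mainTerm_le`), and the sum of `(2 q)^(-deg P)` over all monic `P` is at most `2`.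
-/

open Polynomial

lemma one_add_pow_le (y : ℝ) (h0 : 0 ≤ y) (h1 : y ≤ 1) (l : ℕ) :
    (1 + y) ^ l ≤ 1 + (2 ^ l - 1) * y := by
  induction l with
  | zero => simp
  | succ k ih =>
    have h2 : (1 : ℝ) ≤ 2 ^ k := one_le_pow₀ (by norm_num)
    calc (1 + y) ^ (k + 1) = (1 + y) ^ k * (1 + y) := pow_succ _ _
      _ ≤ (1 + (2 ^ k - 1) * y) * (1 + y) := by gcongr
      _ ≤ 1 + (2 ^ (k + 1) - 1) * y := by
        rw [pow_succ]
        nlinarith [mul_nonneg (sub_nonneg.2 h2) (mul_nonneg h0 (sub_nonneg.2 h1))]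

/-- The summand of `z(l)` as a function of `x = |P|⁻¹`. -/
noncomputable def summand (l : ℕ) (x : ℝ) : ℝ :=
  ((-Real.log (1 - x)) ^ l - Real.log (1 + x) ^ l) / (1 + x)

lemma log_bounds (x : ℝ) (h0 : 0 < x) (h1 : x ≤ 1 / 2) :
    x * (1 - x) ≤ Real.log (1 + x) ∧ Real.log (1 + x) ≤ -Real.log (1 - x) ∧
    -Real.log (1 - x) ≤ x * (1 + 2 * x) ∧
    x ^ 2 ≤ -Real.log (1 - x) - Real.log (1 + x) ∧
    (-Real.log (1 - x) - Real.log (1 + x)) * (1 - x ^ 2) ≤ x ^ 2 := by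
  have hx2 : 0 < 1 - x ^ 2 := by nlinarith
  have hm : 0 < 1 - x := by linarith
  have hp : 0 < 1 + x := by linarith
  have key : -Real.log (1 - x) - Real.log (1 + x) = -Real.log (1 - x ^ 2) := by
    rw [show 1 - x ^ 2 = (1 - x) * (1 + x) by ring, Real.log_mul hm.ne' hp.ne']; ring
  have a1 := Real.one_sub_inv_le_log_of_pos hp
  have a2 := Real.one_sub_inv_le_log_of_pos hm
  have a3 := Real.one_sub_inv_le_log_of_pos hx2
  have a4 := Real.log_le_sub_one_of_pos hx2
  have b1 : x * (1 - x) ≤ 1 - (1 + x)⁻¹ := by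
    rw [show 1 - (1 + x)⁻¹ = x / (1 + x) by field_simp; ring, le_div_iff₀ hp]
    nlinarith [pow_pos h0 3]
  have b2 : (1 - x)⁻¹ - 1 ≤ x * (1 + 2 * x) := by
    rw [show (1 - x)⁻¹ - 1 = x / (1 - x) by field_simp; ring, div_le_iff₀ hm]
    nlinarith [mul_nonneg (sq_nonneg x) (sub_nonneg.2 h1)]
  have b3 : x ^ 2 ≤ -Real.log (1 - x) - Real.log (1 + x) := by rw [key]; linarith
  refine ⟨b1.trans a1, ?_, by linarith, b3, ?_⟩
  · nlinarith [sq_nonneg x]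
  · rw [key]
    calc -Real.log (1 - x ^ 2) * (1 - x ^ 2) ≤ ((1 - x ^ 2)⁻¹ - 1) * (1 - x ^ 2) := by
          gcongr; linarith
      _ = x ^ 2 := by field_simp; ring

lemma summand_estimate (l : ℕ) (hl : 1 ≤ l) (x : ℝ) (h0 : 0 < x) (h1 : x ≤ 1 / 2) :
    |summand l x - l * x ^ (l + 1)| ≤ l * 2 ^ (l + 1) * x ^ (l + 2) := by
  obtain ⟨b1, b2, b3, b4, b5⟩ := log_bounds x h0 h1
  unfold summand
  set u := -Real.log (1 - x)
  set v := Real.log (1 + x)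
  have hx1 : 0 < x * (1 - x) := mul_pos h0 (by linarith)
  have hv : 0 < v := hx1.trans_le b1
  have hp : 0 < 1 + x := by linarith
  obtain ⟨k, rfl⟩ : ∃ k, l = k + 1 := ⟨l - 1, by omega⟩
  rw [← (Commute.all u v).geom_sum₂_mul (k + 1)]
  set S := ∑ i ∈ Finset.range (k + 1), u ^ i * v ^ (k + 1 - 1 - i)
  have hk : ∀ i ∈ Finset.range (k + 1), i + (k + 1 - 1 - i) = k := fun i hi => by
    have := Finset.mem_range.1 hi
    omega
  have hSl : ((k + 1 : ℕ) : ℝ) * (x * (1 - x)) ^ k ≤ S := by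
    have := Finset.card_nsmul_le_sum (Finset.range (k + 1))
      (fun i => u ^ i * v ^ (k + 1 - 1 - i)) ((x * (1 - x)) ^ k) (fun i hi => by
        conv_lhs => rw [← hk i hi, pow_add]
        have := b1.trans b2
        have : 0 < u := hv.trans_le b2
        gcongr)
    rwa [Finset.card_range, nsmul_eq_mul] at this
  have hSu : S ≤ ((k + 1 : ℕ) : ℝ) * (x * (1 + 2 * x)) ^ k := by
    have := Finset.sum_le_card_nsmul (Finset.range (k + 1))
      (fun i => u ^ i * v ^ (k + 1 - 1 - i)) ((x * (1 + 2 * x)) ^ k) (fun i hi => by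
        conv_rhs => rw [← hk i hi, pow_add]
        have := b2.trans b3
        have : 0 < u := hv.trans_le b2
        gcongr)
    rwa [Finset.card_range, nsmul_eq_mul] at this
  have hS0 : 0 ≤ S := le_trans (by positivity) hSl
  set L : ℝ := ((k + 1 : ℕ) : ℝ)
  have hL : 0 ≤ L := Nat.cast_nonneg _
  have hm : 0 ≤ 1 - x := by linarith
  have lower : L * x ^ (k + 2) * (1 - x) ^ (k + 1) ≤ S * (u - v) / (1 + x) := by
    rw [le_div_iff₀ hp]
    calc L * x ^ (k + 2) * (1 - x) ^ (k + 1) * (1 + x)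
        = (L * (x * (1 - x)) ^ k * x ^ 2) * ((1 - x) * (1 + x)) := by rw [mul_pow]; ring
      _ ≤ (L * (x * (1 - x)) ^ k * x ^ 2) * 1 := by gcongr; nlinarith
      _ ≤ S * (u - v) := by rw [mul_one]; gcongr
  have hw : u - v ≤ x ^ 2 * (1 + 2 * x) := by
    have hx2 : 0 < 1 - x ^ 2 := by nlinarith
    refine le_of_mul_le_mul_right (b5.trans ?_) hx2
    have : 0 ≤ x ^ 3 * (2 - x - 2 * x ^ 2) := mul_nonneg (by positivity) (by nlinarith)
    nlinarith
  have upper : S * (u - v) / (1 + x) ≤ L * x ^ (k + 2) * (1 + 2 * x) ^ (k + 1) := by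
    have hd : 0 ≤ u - v := by linarith
    calc S * (u - v) / (1 + x) ≤ S * (u - v) :=
          div_le_self (mul_nonneg hS0 hd) (by linarith)
      _ ≤ (L * (x * (1 + 2 * x)) ^ k) * (x ^ 2 * (1 + 2 * x)) := by gcongr
      _ = _ := by rw [mul_pow]; ring
  have bern : 1 - L * x ≤ (1 - x) ^ (k + 1) := by
    have := one_add_mul_le_pow (a := -x) (by linarith) (k + 1)
    calc 1 - L * x = 1 + ((k + 1 : ℕ) : ℝ) * -x := by ring
      _ ≤ _ := this
      _ = _ := by ring
  have up2 := one_add_pow_le (2 * x) (by linarith) (by linarith) (k + 1)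
  have hL2 : L ≤ 2 ^ (k + 2) := by
    have : k + 1 ≤ 2 ^ (k + 2) := by
      have := Nat.lt_two_pow_self (n := k + 2)
      omega
    simpa [L] using (Nat.cast_le (α := ℝ)).2 this
  have hc : 0 ≤ L * x ^ (k + 2) := by positivity
  rw [abs_le]
  constructor
  · have h3 : 1 - 2 ^ (k + 2) * x ≤ (1 - x) ^ (k + 1) := le_trans (by gcongr) bern
    have := mul_le_mul_of_nonneg_left h3 hc
    have e : L * x ^ (k + 2) * (1 - 2 ^ (k + 2) * x)
      = L * x ^ (k + 1 + 1) - L * 2 ^ (k + 1 + 1) * x ^ (k + 1 + 2) := by ring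
    linarith
  · have h3 : (1 + 2 * x) ^ (k + 1) ≤ 1 + 2 ^ (k + 2) * x := by
      refine up2.trans ?_
      rw [pow_succ 2 (k + 1)]
      nlinarith
    have := mul_le_mul_of_nonneg_left h3 hc
    have e : L * x ^ (k + 2) * (1 + 2 ^ (k + 2) * x)
      = L * x ^ (k + 1 + 1) + L * 2 ^ (k + 1 + 1) * x ^ (k + 1 + 2) := by ring
    linarith

/-- The main term of the summand at a polynomial of degree `n`: `l q^(-l-1)` in degree one, and
zero otherwise. -/
noncomputable def mainTerm (l : ℕ) (q : ℝ) (n : ℕ) : ℝ :=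
  if n = 1 then l * (q ^ (l + 1))⁻¹ else 0

/-- Uniform pointwise error bound. The weight `(2 q)^(-n)` is chosen so that it remains summable
against the `q^n` monic polynomials of degree `n`. -/
lemma abs_sub_mainTerm_le (l : ℕ) (hl : 1 ≤ l) (q : ℝ) (hq : 2 ≤ q) (n : ℕ) (hn : 1 ≤ n) :
    |summand l (q ^ n)⁻¹ - mainTerm l q n|
      ≤ 8 * (l * 2 ^ (l + 1)) * (q ^ (l + 1))⁻¹ * ((2 * q) ^ n)⁻¹ := by
  have hq0 : 0 < q := by linarith
  have hx0 : 0 < (q ^ n)⁻¹ := by positivity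
  have hqn : 2 ≤ q ^ n := hq.trans (le_self_pow₀ (by linarith) (by omega))
  have hx1 : (q ^ n)⁻¹ ≤ 1 / 2 := by
    rw [one_div]; exact inv_anti₀ (by norm_num) hqn
  have est := summand_estimate l hl _ hx0 hx1
  unfold mainTerm
  split_ifs with h
  · subst h
    rw [pow_one] at est ⊢
    rw [← inv_pow q]
    refine est.trans ?_
    rw [pow_one, mul_inv, pow_succ _ (l + 1)]
    have : 0 ≤ (l * 2 ^ (l + 1) : ℝ) * (q⁻¹ ^ (l + 1) * q⁻¹) := by positivity
    nlinarith
  · rw [sub_zero]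
    obtain ⟨m, rfl⟩ : ∃ m, n = m + 2 := ⟨n - 2, by omega⟩
    obtain ⟨k, rfl⟩ : ∃ k, l = k + 1 := ⟨l - 1, by omega⟩
    set x := (q ^ (m + 2))⁻¹ with hx
    set L : ℝ := ((k + 1 : ℕ) : ℝ)
    have hL : 0 ≤ L := Nat.cast_nonneg _
    have h2 : (1 : ℝ) ≤ 2 ^ (k + 1 + 1) := one_le_pow₀ (by norm_num)
    have step : |summand (k + 1) x| ≤ 2 * (L * 2 ^ (k + 1 + 1)) * x ^ (k + 2) := by
      have t1 := abs_sub_abs_le_abs_sub (summand (k + 1) x) (L * x ^ (k + 1 + 1))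
      rw [abs_of_nonneg (by positivity : 0 ≤ L * x ^ (k + 1 + 1))] at t1
      have hxk : 0 ≤ x ^ (k + 2) := by positivity
      have t2 : L * x ^ (k + 1 + 1) ≤ L * 2 ^ (k + 1 + 1) * x ^ (k + 2) := by
        rw [show k + 1 + 1 = k + 2 from rfl]
        gcongr
        exact le_mul_of_one_le_right hL h2
      have t3 : L * 2 ^ (k + 1 + 1) * x ^ (k + 1 + 2) ≤ L * 2 ^ (k + 1 + 1) * x ^ (k + 2) := by
        gcongr ?_ * ?_
        exact pow_le_pow_of_le_one hx0.le (by linarith) (by omega)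
      linarith
    -- `n l ≥ (l + 1) + (n - 2)` for `n ≥ 2`, and `q ≥ 2`, so `q^(-n l) ≤ q^(-l-1) 2^(-(n-2))`.
    have dec : x ^ (k + 2) ≤ 4 * ((q ^ (k + 1 + 1))⁻¹ * ((2 * q) ^ (m + 2))⁻¹) := by
      rw [show (4 : ℝ) * ((q ^ (k + 1 + 1))⁻¹ * ((2 * q) ^ (m + 2))⁻¹)
          = (q ^ (k + 2) * (2 ^ m * q ^ (m + 2)))⁻¹ by
        rw [mul_pow, pow_add 2 m 2]; field_simp; norm_num, hx, inv_pow]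
      apply inv_anti₀ (by positivity)
      calc q ^ (k + 2) * (2 ^ m * q ^ (m + 2)) ≤ q ^ (k + 2) * (q ^ m * q ^ (m + 2)) := by gcongr
        _ = q ^ (k + 2 + (m + (m + 2))) := by ring
        _ ≤ q ^ ((m + 2) * (k + 2)) := pow_le_pow_right₀ (by linarith) (by nlinarith)
        _ = _ := pow_mul _ _ _
    calc |summand (k + 1) x| ≤ 2 * (L * 2 ^ (k + 1 + 1)) * x ^ (k + 2) := step
      _ ≤ 2 * (L * 2 ^ (k + 1 + 1)) * (4 * ((q ^ (k + 1 + 1))⁻¹ * ((2 * q) ^ (m + 2))⁻¹)) := by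
        gcongr
      _ = _ := by ring

section Sums

variable (Fq : Type) [Field Fq] [Fintype Fq]

/-- The sum of `(2 q)^(-n)` over all pairs of a degree `n` and a tuple of `n` lower coefficients,
that is, over all monic polynomials. -/
lemma hasSum_coeffs :
    HasSum (fun s : Σ n : ℕ, (Fin n → Fq) => ((2 * (Fintype.card Fq : ℝ)) ^ s.1)⁻¹) 2 := by
  have hq : (0 : ℝ) < Fintype.card Fq := by exact_mod_cast Fintype.card_pos
  have hf : ∀ n : ℕ, HasSum (fun _ : Fin n → Fq => ((2 * (Fintype.card Fq : ℝ)) ^ n)⁻¹)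
      ((1 / 2 : ℝ) ^ n) := fun n => by
    have := hasSum_fintype (fun _ : Fin n → Fq => ((2 * (Fintype.card Fq : ℝ)) ^ n)⁻¹)
    convert this using 1
    simp only [Finset.sum_const, Finset.card_univ, Fintype.card_fun, Fintype.card_fin,
      nsmul_eq_mul, Nat.cast_pow, mul_pow, div_pow, one_pow]
    field_simp
  have hs : Summable (fun s : Σ n : ℕ, (Fin n → Fq) => ((2 * (Fintype.card Fq : ℝ)) ^ s.1)⁻¹) := by
    rw [summable_sigma_of_nonneg (fun _ => by positivity)]
    refine ⟨fun n => (hf n).summable, ?_⟩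
    simp_rw [fun n => (hf n).tsum_eq]
    exact summable_geometric_two
  exact (hs.hasSum_iff).2 ((hs.hasSum.sigma hf).unique hasSum_geometric_two)

/-- A monic irreducible polynomial is encoded by its degree and its non-leading coefficients. -/
def lowerCoeffs (P : {P : Polynomial Fq // P.Monic ∧ Irreducible P}) : Σ n : ℕ, (Fin n → Fq) :=
  ⟨P.1.natDegree, fun i => P.1.coeff i⟩

lemma lowerCoeffs_injective : Function.Injective (lowerCoeffs Fq) := by
  rintro ⟨P, hP, hP'⟩ ⟨Q, hQ, hQ'⟩ h
  have hd : P.natDegree = Q.natDegree := congrArg Sigma.fst h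
  have hc : ∀ n (s : Σ n : ℕ, (Fin n → Fq)) (t : Σ n : ℕ, (Fin n → Fq)), s = t →
      ∀ (h1 : n < s.1) (h2 : n < t.1), s.2 ⟨n, h1⟩ = t.2 ⟨n, h2⟩ := by
    rintro n s _ rfl h1 h2; rfl
  apply Subtype.ext
  ext n
  rcases lt_trichotomy n P.natDegree with h1 | h1 | h1
  · exact hc n _ _ h h1 (h1.trans_eq hd)
  · show P.coeff n = Q.coeff n
    rw [h1, hP.coeff_natDegree, hd, hQ.coeff_natDegree]
  · show P.coeff n = Q.coeff n
    rw [coeff_eq_zero_of_natDegree_lt h1, coeff_eq_zero_of_natDegree_lt (hd ▸ h1)]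

lemma summable_weight : Summable (fun P : {P : Polynomial Fq // P.Monic ∧ Irreducible P} =>
    ((2 * (Fintype.card Fq : ℝ)) ^ P.1.natDegree)⁻¹) := by
  have h := (hasSum_coeffs Fq).summable.comp_injective (lowerCoeffs_injective Fq)
  simpa only [Function.comp_def, lowerCoeffs] using h

lemma tsum_weight_le : ∑' P : {P : Polynomial Fq // P.Monic ∧ Irreducible P},
    ((2 * (Fintype.card Fq : ℝ)) ^ P.1.natDegree)⁻¹ ≤ 2 := by
  refine le_of_le_of_eq ?_ (hasSum_coeffs Fq).tsum_eq
  exact (summable_weight Fq).tsum_le_tsum_of_inj (lowerCoeffs Fq) (lowerCoeffs_injective Fq)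
    (fun _ _ => by positivity) (fun _ => le_rfl) (hasSum_coeffs Fq).summable

lemma hasSum_mainTerm (l : ℕ) :
    HasSum (fun P : {P : Polynomial Fq // P.Monic ∧ Irreducible P} =>
      mainTerm l (Fintype.card Fq) P.1.natDegree) (l * ((Fintype.card Fq : ℝ) ^ l)⁻¹) := by
  have hq : (0 : ℝ) < Fintype.card Fq := by exact_mod_cast Fintype.card_pos
  let i : Fq → {P : Polynomial Fq // P.Monic ∧ Irreducible P} :=
    fun a => ⟨X - C a, monic_X_sub_C a, irreducible_X_sub_C a⟩
  have hi : Function.Injective i := fun a b h => by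
    have h' : (X - C a : Polynomial Fq) = X - C b := congrArg Subtype.val h
    exact C_injective (sub_right_injective h')
  rw [← hi.hasSum_iff]
  · have := hasSum_fintype ((fun P : {P : Polynomial Fq // P.Monic ∧ Irreducible P} =>
      mainTerm l (Fintype.card Fq) P.1.natDegree) ∘ i)
    convert this using 1
    simp only [Function.comp_apply, i, natDegree_X_sub_C, mainTerm, if_true, Finset.sum_const,
      Finset.card_univ, nsmul_eq_mul]
    rw [pow_succ]
    field_simp
  · rintro ⟨P, hP, hP'⟩ h
    refine if_neg fun h1 => h ⟨-P.coeff 0, Subtype.ext ?_⟩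
    have := hP.eq_X_add_C h1
    show X - C (-P.coeff 0) = P
    rw [C_neg, sub_neg_eq_add, ← this]

end Sums

/-- For every odd integer `λ ≥ 1` there is a constant `C_λ > 0` such that for every
prime power `q` (realized as the cardinality of a finite field `Fq`) one has
`|z(λ) - λ q^(-λ)| ≤ C_λ q^(-λ-1)`, where
`z(λ) = ∑_P (u_P^λ - v_P^λ)/(1 + |P|⁻¹)`, the sum over all monic irreducible
polynomials `P ∈ Fq[X]`. -/
theorem z_odd_asymptotic (l : ℕ) (hl : 1 ≤ l) (hodd : Odd l) :
    ∃ C : ℝ, 0 < C ∧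
      ∀ (Fq : Type) [Field Fq] [Fintype Fq],
        |(∑' P : {P : Polynomial Fq // P.Monic ∧ Irreducible P},
            (uP P.1 ^ l - vP P.1 ^ l) /
              (1 + ((Fintype.card Fq : ℝ) ^ P.1.natDegree)⁻¹))
          - (l : ℝ) * ((Fintype.card Fq : ℝ) ^ l)⁻¹|
        ≤ C * ((Fintype.card Fq : ℝ) ^ (l + 1))⁻¹ := by
  have hl0 : (0 : ℝ) < l := by exact_mod_cast hl
  refine ⟨16 * (l * 2 ^ (l + 1)), by positivity, fun Fq _ _ => ?_⟩
  set q : ℝ := (Fintype.card Fq : ℝ) with hq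
  have hq2 : 2 ≤ q := by
    have : 1 < Fintype.card Fq := Fintype.one_lt_card
    rw [hq]
    exact_mod_cast this
  set B : ℝ := 8 * (l * 2 ^ (l + 1)) * (q ^ (l + 1))⁻¹ with hB
  have hB0 : 0 ≤ B := by positivity
  have hbound : ∀ P : {P : Polynomial Fq // P.Monic ∧ Irreducible P},
      ‖summand l (q ^ P.1.natDegree)⁻¹ - mainTerm l q P.1.natDegree‖
        ≤ B * ((2 * q) ^ P.1.natDegree)⁻¹ := fun P =>
    abs_sub_mainTerm_le l hl q hq2 _ P.2.2.natDegree_pos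
  have hw := (summable_weight Fq).mul_left B
  have hdiff := Summable.of_norm_bounded hw hbound
  have hmain := hasSum_mainTerm Fq l
  have hsum : ∑' P : {P : Polynomial Fq // P.Monic ∧ Irreducible P},
        (uP P.1 ^ l - vP P.1 ^ l) / (1 + (q ^ P.1.natDegree)⁻¹)
      = (∑' P : {P : Polynomial Fq // P.Monic ∧ Irreducible P},
          (summand l (q ^ P.1.natDegree)⁻¹ - mainTerm l q P.1.natDegree))
        + l * (q ^ l)⁻¹ := by
    rw [← (hdiff.hasSum.add hmain).tsum_eq]
    refine tsum_congr fun P => ?_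
    rw [sub_add_cancel]
    rfl
  rw [hsum, add_sub_cancel_right]
  calc _ ≤ B * ∑' P : {P : Polynomial Fq // P.Monic ∧ Irreducible P},
          ((2 * q) ^ P.1.natDegree)⁻¹ := tsum_of_norm_bounded
            ((summable_weight Fq).hasSum.mul_left B) hbound
    _ ≤ B * 2 := by gcongr; exact tsum_weight_le Fq
    _ = _ := by rw [hB]; ring
end
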